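/- Let n ≥ 3, let D be a rich domain, and let f : D^n → M be an efficient, individually rational and obviously strategy-proof rule satisfying equity under unanimous acclaim. Let G be the undirected graph on O whose edges are the pairs of connected objects. Fix a path (o^1, …, o^q) in G with q ≥ 3 (non-repeated objects with o^m ∼ o^{m+1} for all m). Then for every k ∈ {1,…,q} and every preference P ∈ D with r_1(P) = o^k: if 1 < s < k then o^s P o^{s-1}, and if k < t < q then o^t P o^{t+1}. -/

import Mathlib

/-!
The claim reduces to a statement about three objects: if `x ∼ y ∼ z`, then no preference in `D`
ranks `y` below both `x` and `z` (`middle_not_worst`). Given this, a preference with top `o^k`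
descends along the path away from `o^k`: once `o^{s+1}` beats `o^s`, the middle object `o^s` of
the triple `o^{s-1}, o^s, o^{s+1}` must beat `o^{s-1}`.

For the triple, suppose `p ∈ D` ranks `y` worst among `x, y, z`, say `x, z, y` (the order
`z, x, y` is symmetric). Connectedness gives `b, e ∈ D` with restrictions `y, x, z` and
`z, y, x`. Let every other agent be null, and let the types be `{b, e}` for agent `x`, `{p, e}` for
agent `y` and `{p, b}` for agent `z`. All three agents are always active, so equity, individual
rationality and efficiency determine the following assignments, where a profile is listed in the
order `x, y, z`.

* `(e, e, b)` gives `x` to agent `x`, while `(b, p, p)` gives her `y`, which `e` prefers.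
* `(e, p, p)` gives `y` to agent `y`, while `(b, e, p)` gives her `z`, which `p` prefers.
* `(b, p, b)` gives `z` to agent `z`, while `(b, e, p)` gives her `x`, which `b` prefers.

Hence for no agent can her two types be told apart by an obviously dominant plan at a history
that all these profiles reach. So all eight profiles follow a single play, and `f` is constant on
them (`OSP.const_of_inseparable`), contradicting the first item.
-/


/-- A preference is a strict linear order on the objects `Fin n`, encoded by its
rank function: `p o < p o'` means object `o` is strictly preferred to `o'`. -/
abbrev Pref (n : ℕ) := Fin n ≃ Fin n

/-- `o` is strictly preferred to `o'` under `p`. -/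
def prefers {n : ℕ} (p : Pref n) (o o' : Fin n) : Prop := p o < p o'

/-- `o` is weakly preferred to `o'` under `p` (i.e. `o P o'` or `o = o'`). -/
def weakPref {n : ℕ} (p : Pref n) (o o' : Fin n) : Prop := p o ≤ p o'

/-- The top-ranked object `r_1(p)`. -/
def topObj {n : ℕ} [NeZero n] (p : Pref n) : Fin n := p.symm 0

/-- The second-ranked object `r_2(p)`. -/
def secondObj {n : ℕ} [NeZero n] (p : Pref n) : Fin n := p.symm 1

/-- The `p`-best object of a (nonempty) finite set `S`: `max^p S`. -/
noncomputable def best {n : ℕ} [NeZero n] (p : Pref n) (S : Finset (Fin n)) : Fin n :=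
  (S.toList.argmin (fun o => p o)).getD 0

/-- A profile belongs to the domain `D` coordinatewise. -/
def inD {n : ℕ} (D : Set (Pref n)) (P : Fin n → Pref n) : Prop := ∀ i, P i ∈ D

/-- Individual rationality of an allocation at a profile: each agent `i` weakly
prefers her assigned object to her endowment `o_i = i`. -/
def IRAt {n : ℕ} (P : Fin n → Pref n) (m : Fin n → Fin n) : Prop :=
  ∀ i, weakPref (P i) (m i) i

/-- `m'` Pareto dominates `m` at profile `P`. -/
def ParetoDom {n : ℕ} (P : Fin n → Pref n) (m' m : Fin n → Fin n) : Prop :=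
  (∀ i, weakPref (P i) (m' i) (m i)) ∧ ∃ j, prefers (P j) (m' j) (m j)

/-- Pareto efficiency of an allocation at a profile. -/
def EffAt {n : ℕ} (P : Fin n → Pref n) (m : Fin n → Fin n) : Prop :=
  ¬ ∃ m' : Fin n → Fin n, Function.Bijective m' ∧ ParetoDom P m' m

/-- A rule maps profiles from the domain to allocations (bijections `N → O`). -/
def IsRule {n : ℕ} (D : Set (Pref n)) (f : (Fin n → Pref n) → (Fin n → Fin n)) : Prop :=
  ∀ P, inD D P → Function.Bijective (f P)

def Efficient {n : ℕ} (D : Set (Pref n)) (f : (Fin n → Pref n) → (Fin n → Fin n)) : Prop :=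
  ∀ P, inD D P → EffAt P (f P)

def IndRational {n : ℕ} (D : Set (Pref n)) (f : (Fin n → Pref n) → (Fin n → Fin n)) : Prop :=
  ∀ P, inD D P → IRAt P (f P)

def StrategyProof {n : ℕ} (D : Set (Pref n)) (f : (Fin n → Pref n) → (Fin n → Fin n)) : Prop :=
  ∀ P, inD D P → ∀ i, ∀ p' ∈ D, weakPref (P i) (f P i) (f (Function.update P i p') i)

/-- The active agents at profile `P` (those whose top object differs from their
endowment); since `o_i = i`, the set of active objects coincides with it. -/
def activeAgents {n : ℕ} [NeZero n] (P : Fin n → Pref n) : Finset (Fin n) :=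
  Finset.univ.filter (fun i => topObj (P i) ≠ i)

/-- Agent `i` is the acclaimed agent at profile `P`. -/
def acclaimed {n : ℕ} [NeZero n] (P : Fin n → Pref n) (i : Fin n) : Prop :=
  2 < (activeAgents P).card ∧ i ∈ activeAgents P ∧
    best (P i) (activeAgents P) ≠ i ∧
    ∀ j ∈ activeAgents P, j ≠ i → best (P j) (activeAgents P) = i

/-- Equity under unanimous acclaim. -/
def EquityUA {n : ℕ} [NeZero n] (D : Set (Pref n))
    (f : (Fin n → Pref n) → (Fin n → Fin n)) : Prop :=
  ∀ P, inD D P → ∀ i, acclaimed P i → f P i = best (P i) (activeAgents P)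

/-- Agents `i` and `j` form the acclaimed pair at profile `P`. -/
def acclaimedPair {n : ℕ} [NeZero n] (P : Fin n → Pref n) (i j : Fin n) : Prop :=
  ∃ Ni Nj : Finset (Fin n),
    Disjoint Ni Nj ∧ Ni ∪ Nj = activeAgents P ∧ Ni.card = Nj.card ∧ 1 < Ni.card ∧
    i ∈ Nj ∧ j ∈ Ni ∧
    (∀ l ∈ Ni, best (P l) (activeAgents P) = i) ∧
    (∀ l ∈ Nj, best (P l) (activeAgents P) = j)

/-- Equity under bipartite acclaim. -/
def EquityBA {n : ℕ} [NeZero n] (D : Set (Pref n))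
    (f : (Fin n → Pref n) → (Fin n → Fin n)) : Prop :=
  ∀ P, inD D P → ∀ i j, acclaimedPair P i j → f P i = j ∨ f P j = i

/-- Equity⁺ under bipartite acclaim. -/
def EquityPlusBA {n : ℕ} [NeZero n] (D : Set (Pref n))
    (f : (Fin n → Pref n) → (Fin n → Fin n)) : Prop :=
  ∀ P, inD D P → ∀ i j, acclaimedPair P i j → f P i = j ∧ f P j = i

/-- Single-peakedness of `p` w.r.t. the linear order on objects encoded by the
position permutation `σ` (`o < o'` iff `σ o < σ o'`). -/
def singlePeaked {n : ℕ} [NeZero n] (σ : Fin n ≃ Fin n) (p : Pref n) : Prop :=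
  ∀ o o' : Fin n,
    ((σ o' < σ o ∧ σ o < σ (topObj p)) ∨ (σ (topObj p) < σ o ∧ σ o < σ o')) →
    prefers p o o'

/-- The full single-peaked domain `D_<`. -/
def spDomain {n : ℕ} [NeZero n] (σ : Fin n ≃ Fin n) : Set (Pref n) :=
  {p | singlePeaked σ p}

/-- `D` is a single-peaked domain. -/
def IsSPDomain {n : ℕ} [NeZero n] (D : Set (Pref n)) : Prop :=
  ∃ σ : Fin n ≃ Fin n, D ⊆ spDomain σ

/-- Objects `o` and `o'` are connected in `D`: `o ∼ o'`. -/
def connectedObj {n : ℕ} [NeZero n] (D : Set (Pref n)) (o o' : Fin n) : Prop :=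
  ∃ p ∈ D, ∃ p' ∈ D, topObj p = o ∧ secondObj p = o' ∧ topObj p' = o' ∧ secondObj p' = o

/-- `D` is path-connected. -/
def pathConnected {n : ℕ} [NeZero n] (D : Set (Pref n)) : Prop :=
  ∀ o o' : Fin n, o ≠ o' → ∃ l : List (Fin n),
    l.Nodup ∧ l.head? = some o ∧ l.getLast? = some o' ∧ l.Chain' (connectedObj D)

/-- `p` and `p'` rank all objects in exactly opposite orders. -/
def reversedPair {n : ℕ} (p p' : Pref n) : Prop :=
  ∀ o o', prefers p o o' ↔ prefers p' o' o

/-- A rich domain: path-connected and containing two completely reversed preferences. -/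
def richDomain {n : ℕ} [NeZero n] (D : Set (Pref n)) : Prop :=
  pathConnected D ∧ ∃ p ∈ D, ∃ p' ∈ D, reversedPair p p'

/-- The restriction `→(x,y,z) ∈ R(D)`: whenever `x` is the best of `{x,y,z}`,
`y` is ranked above `z`. -/
def RestrR {n : ℕ} [NeZero n] (D : Set (Pref n)) (x y z : Fin n) : Prop :=
  ∀ p ∈ D, best p {x, y, z} = x → prefers p y z

/-- The ternary relation `(x,y,z) ∈ B(D)`. -/
def RelB {n : ℕ} [NeZero n] (D : Set (Pref n)) (x y z : Fin n) : Prop :=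
  RestrR D x y z ∧ RestrR D z y x

/-! ### Extensive game forms and obvious strategy-proofness -/

/-- An extensive game form: a finite rooted tree of histories (lists of actions,
prefix-closed), a player function and an outcome function on terminal histories. -/
structure GameForm (n : ℕ) where
  hist : Finset (List ℕ)
  root_mem : [] ∈ hist
  prefix_closed : ∀ h a, h ++ [a] ∈ hist → h ∈ hist
  player : List ℕ → Fin n
  outcome : List ℕ → (Fin n → Fin n)

/-- A strategy chooses an action at every history. -/
abbrev Strategy : Type := List ℕ → ℕ

/-- Terminal histories of the game form. -/
def GameForm.Terminal {n : ℕ} (Γ : GameForm n) (h : List ℕ) : Prop :=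
  h ∈ Γ.hist ∧ ∀ a, h ++ [a] ∉ Γ.hist

/-- A strategy of agent `i` is valid if it always chooses a feasible action. -/
def GameForm.ValidStrat {n : ℕ} (Γ : GameForm n) (i : Fin n) (s : Strategy) : Prop :=
  ∀ h ∈ Γ.hist, ¬ Γ.Terminal h → Γ.player h = i → h ++ [s h] ∈ Γ.hist

/-- Play from `h` under the strategy profile `s` reaches history `h'`. -/
inductive GameForm.Reaches {n : ℕ} (Γ : GameForm n) (s : Fin n → Strategy) :
    List ℕ → List ℕ → Prop
  | refl (h : List ℕ) : GameForm.Reaches Γ s h h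
  | step {h h' : List ℕ} : GameForm.Reaches Γ s h h' → h' ∈ Γ.hist → ¬ Γ.Terminal h' →
      GameForm.Reaches Γ s h (h' ++ [s (Γ.player h') h'])

/-- `o` belongs to the feasible set `X_i(h, s_i)` of agent `i` at history `h`
given her strategy `si`. -/
def GameForm.Feas {n : ℕ} (Γ : GameForm n) (i : Fin n) (h : List ℕ) (si : Strategy)
    (o : Fin n) : Prop :=
  ∃ s : Fin n → Strategy, (∀ j, Γ.ValidStrat j (s j)) ∧ s i = si ∧
    ∃ t, Γ.Reaches s h t ∧ Γ.Terminal t ∧ Γ.outcome t i = o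

/-- `h` is a decision node of `i` reachable (on-path) when `i` plays `si`. -/
def GameForm.ReachableNode {n : ℕ} (Γ : GameForm n) (i : Fin n) (si : Strategy)
    (h : List ℕ) : Prop :=
  h ∈ Γ.hist ∧ ¬ Γ.Terminal h ∧ Γ.player h = i ∧
    ∃ s : Fin n → Strategy, (∀ j, Γ.ValidStrat j (s j)) ∧ s i = si ∧ Γ.Reaches s [] h

/-- `si` obviously dominates `si'` at preference `p`: at every earliest point of
departure, the worst feasible outcome under `si` is weakly preferred to the best
feasible outcome under `si'`. -/
def GameForm.ObvDom {n : ℕ} (Γ : GameForm n) (i : Fin n) (p : Pref n)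
    (si si' : Strategy) : Prop :=
  ∀ h, Γ.ReachableNode i si h → Γ.ReachableNode i si' h → si h ≠ si' h →
    ∀ o o', Γ.Feas i h si o → Γ.Feas i h si' o' → weakPref p o o'

/-- Obvious strategy-proofness of a rule `f` on domain `D`. -/
def OSP {n : ℕ} (D : Set (Pref n)) (f : (Fin n → Pref n) → (Fin n → Fin n)) : Prop :=
  ∃ (Γ : GameForm n) (S : Fin n → Pref n → Strategy),
    (∀ i p, p ∈ D → Γ.ValidStrat i (S i p)) ∧
    (∀ i p, p ∈ D → ∀ s', Γ.ValidStrat i s' → Γ.ObvDom i p (S i p) s') ∧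
    (∀ P : Fin n → Pref n, inD D P →
      ∃ t, Γ.Reaches (fun j => S j (P j)) [] t ∧ Γ.Terminal t ∧ Γ.outcome t = f P)

/-! ### The crawler, the designator, and top trading cycles -/

/-- The running state of the crawler/designator algorithms: the sub-allocation of
objects currently held by remaining agents, and the final assignments so far. -/
structure AlgState (n : ℕ) where
  held : Fin n → Option (Fin n)
  res : Fin n → Option (Fin n)

/-- The object currently held by agent `i`. -/
def heldObj {n : ℕ} [NeZero n] (st : AlgState n) (i : Fin n) : Fin n := (st.held i).getD 0

/-- The remaining agents. -/
def remAgents {n : ℕ} (st : AlgState n) : Finset (Fin n) :=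
  Finset.univ.filter (fun i => (st.held i).isSome)

/-- The remaining objects. -/
def remObjs {n : ℕ} [NeZero n] (st : AlgState n) : Finset (Fin n) :=
  (remAgents st).image (heldObj st)

/-- The object of `S` adjacently larger than `o` w.r.t. the order `σ`. -/
noncomputable def adjLarger {n : ℕ} (σ : Fin n ≃ Fin n) (S : Finset (Fin n)) (o : Fin n) : Fin n :=
  ((S.filter (fun o' => σ o < σ o')).toList.argmin (fun o' => σ o')).getD o

/-- The agent `i^s` leaving at the current step: the remaining agent holding the
`σ`-smallest object among those whose best remaining object is weakly below their
held object. -/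
noncomputable def leaver {n : ℕ} [NeZero n] (σ : Fin n ≃ Fin n) (P : Fin n → Pref n)
    (st : AlgState n) : Option (Fin n) :=
  ((remAgents st).filter
      (fun i => σ (best (P i) (remObjs st)) ≤ σ (heldObj st i))).toList.argmin
    (fun i => σ (heldObj st i))

/-- One step of the crawler: the leaving agent takes her best remaining object,
and every remaining agent holding an object weakly above the taken object and
strictly below the leaver's object crawls to the adjacently larger object. -/
noncomputable def crawlerStep {n : ℕ} [NeZero n] (σ : Fin n ≃ Fin n) (P : Fin n → Pref n)
    (st : AlgState n) : AlgState n :=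
  match leaver σ P st with
  | none => st
  | some is =>
    let taken := best (P is) (remObjs st)
    { held := fun j =>
        if j = is then none
        else if (st.held j).isSome = true ∧ σ taken ≤ σ (heldObj st j) ∧
            σ (heldObj st j) < σ (heldObj st is) then
          some (adjLarger σ (remObjs st) (heldObj st j))
        else st.held j,
      res := Function.update st.res is (some taken) }

/-- Initially every agent holds her endowment `o_i = i`. -/
def crawlerInit (n : ℕ) : AlgState n := ⟨fun i => some i, fun _ => none⟩

/-- The crawler rule w.r.t. the object order `σ`. -/
noncomputable def crawler {n : ℕ} [NeZero n] (σ : Fin n ≃ Fin n) (P : Fin n → Pref n) :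
    Fin n → Fin n :=
  fun i => (((crawlerStep σ P)^[n] (crawlerInit n)).res i).getD 0

/-- `τ(i)`: the active agent whose endowment is `max^{P_i} O_{m̄⁰}`. -/
noncomputable def desTau {n : ℕ} [NeZero n] (P : Fin n → Pref n) (i : Fin n) : Fin n :=
  best (P i) (activeAgents P)

/-- Stage I of the designator: null agents receive their endowments and leave. -/
def desInit {n : ℕ} [NeZero n] (P : Fin n → Pref n) : AlgState n :=
  { held := fun i => if topObj (P i) = i then none else some i,
    res := fun i => if topObj (P i) = i then some i else none }

/-- One step of Stage II of the designator: the leaving agent `i^s` takes her best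
remaining object; if `τ(i^s)` is remaining and holds an object weakly above the
taken object and strictly below `i^s`'s held object, then `τ(i^s)` directly
inherits `i^s`'s object and only agents below `τ(i^s)` crawl (designating);
otherwise the crawling updating applies. -/
noncomputable def desStep {n : ℕ} [NeZero n] (σ : Fin n ≃ Fin n) (P : Fin n → Pref n)
    (st : AlgState n) : AlgState n :=
  match leaver σ P st with
  | none => st
  | some is =>
    let taken := best (P is) (remObjs st)
    let t := desTau P is
    if (st.held t).isSome = true ∧ σ taken ≤ σ (heldObj st t) ∧
        σ (heldObj st t) < σ (heldObj st is) then
      { held := fun j =>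
          if j = is then none
          else if j = t then some (heldObj st is)
          else if (st.held j).isSome = true ∧ σ taken ≤ σ (heldObj st j) ∧
              σ (heldObj st j) < σ (heldObj st t) then
            some (adjLarger σ (remObjs st) (heldObj st j))
          else st.held j,
        res := Function.update st.res is (some taken) }
    else
      { held := fun j =>
          if j = is then none
          else if (st.held j).isSome = true ∧ σ taken ≤ σ (heldObj st j) ∧
              σ (heldObj st j) < σ (heldObj st is) then
            some (adjLarger σ (remObjs st) (heldObj st j))
          else st.held j,
        res := Function.update st.res is (some taken) }

/-- The designator rule w.r.t. the object order `σ`. -/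
noncomputable def designator {n : ℕ} [NeZero n] (σ : Fin n ≃ Fin n) (P : Fin n → Pref n) :
    Fin n → Fin n :=
  fun i => (((desStep σ P)^[n] (desInit P)).res i).getD 0

/-- One round of top trading cycles: every remaining agent points to the owner of
her favorite remaining object (owner of object `o` is agent `o`), and every agent
lying on a pointing cycle receives the object she points to and leaves. -/
noncomputable def ttcStep {n : ℕ} [NeZero n] (P : Fin n → Pref n) (res : Fin n → Option (Fin n)) :
    Fin n → Option (Fin n) :=
  let rem : Finset (Fin n) := Finset.univ.filter (fun i => res i = none)
  let pt : Fin n → Fin n := fun i => best (P i) rem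
  fun i =>
    match res i with
    | some o => some o
    | none =>
      if (List.range (n + 1)).any (fun k => (k != 0) && (pt^[k] i == i)) then some (pt i)
      else none

/-- The top-trading-cycle rule. -/
noncomputable def ttc {n : ℕ} [NeZero n] (P : Fin n → Pref n) : Fin n → Fin n :=
  fun i => (((ttcStep P)^[n] (fun _ => none)) i).getD 0


/-! ### Plays of a game form -/

theorem GameForm.Reaches.eq_or_step {n : ℕ} {Γ : GameForm n} {s : Fin n → Strategy}
    {a t : List ℕ} (h : Γ.Reaches s a t) :
    t = a ∨ (¬ Γ.Terminal a ∧ Γ.Reaches s (a ++ [s (Γ.player a) a]) t) := by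
  induction h with
  | refl => exact Or.inl rfl
  | step _ hm ht ih =>
    right
    rcases ih with rfl | ⟨ha, hr⟩
    · exact ⟨ht, .refl _⟩
    · exact ⟨ha, .step hr hm ht⟩

/-- A strategy profile determines a unique play, so a terminal history it reaches lies below every
other history it reaches. -/
theorem GameForm.Reaches.to_terminal {n : ℕ} {Γ : GameForm n} {s : Fin n → Strategy}
    {a b t : List ℕ} (hb : Γ.Reaches s a b) (ht : Γ.Reaches s a t) (hT : Γ.Terminal t) :
    Γ.Reaches s b t := by
  induction hb with
  | refl => exact ht
  | step _ _ hn ih =>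
    rcases ih.eq_or_step with rfl | ⟨_, hr⟩
    · exact absurd hT hn
    · exact hr

/-- If on a product `T` of type sets no two types of an agent can be separated, in the sense that
one of them may do strictly worse than the other does at some profile of `T`, then an obviously
strategy-proof rule is constant on `T`. -/
theorem OSP.const_of_inseparable {n : ℕ} {D : Set (Pref n)}
    {f : (Fin n → Pref n) → (Fin n → Fin n)} (hosp : OSP D f) (T : Fin n → Set (Pref n))
    (hTD : ∀ i, T i ⊆ D)
    (hT : ∀ i, ∀ p ∈ T i, ∀ p' ∈ T i, p ≠ p' →
      ∃ Q Q' : Fin n → Pref n, (∀ j, Q j ∈ T j) ∧ (∀ j, Q' j ∈ T j) ∧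
        ((Q i = p ∧ Q' i = p') ∨ (Q i = p' ∧ Q' i = p)) ∧ prefers (Q i) (f Q' i) (f Q i))
    {Q Q' : Fin n → Pref n} (hQ : ∀ j, Q j ∈ T j) (hQ' : ∀ j, Q' j ∈ T j) : f Q = f Q' := by
  obtain ⟨Γ, S, hval, hdom, hout⟩ := hosp
  have hv : ∀ R : Fin n → Pref n, (∀ j, R j ∈ T j) → ∀ j, Γ.ValidStrat j (S j (R j)) :=
    fun R hR j => hval j _ (hTD j (hR j))
  have common : ∀ h, Γ.Reaches (fun j => S j (Q j)) [] h →
      ∀ R : Fin n → Pref n, (∀ j, R j ∈ T j) → Γ.Reaches (fun j => S j (R j)) [] h := by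
    intro h hh
    induction hh with
    | refl => exact fun R _ => .refl _
    | @step h' _ hm hn ih =>
      intro R hR
      have hact : S (Γ.player h') (Q (Γ.player h')) h' = S (Γ.player h') (R (Γ.player h')) h' := by
        by_contra hne
        obtain ⟨U, U', hU, hU', hUp, hpref⟩ := hT (Γ.player h') _ (hQ _) _ (hR _)
          (fun he => hne (by rw [he]))
        have hneU : S (Γ.player h') (U (Γ.player h')) h'
            ≠ S (Γ.player h') (U' (Γ.player h')) h' := by
          rcases hUp with ⟨h1, h2⟩ | ⟨h1, h2⟩ <;> rw [h1, h2]
          · exact hne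
          · exact fun he => hne he.symm
        have feas : ∀ V : Fin n → Pref n, (∀ j, V j ∈ T j) →
            Γ.Feas (Γ.player h') h' (S (Γ.player h') (V (Γ.player h'))) (f V (Γ.player h')) := by
          intro V hV
          obtain ⟨t, ht, htT, hto⟩ := hout V (fun j => hTD j (hV j))
          exact ⟨_, hv V hV, rfl, t, (ih V hV).to_terminal ht htT, htT, by rw [hto]⟩
        have := hdom (Γ.player h') _ (hTD _ (hU _)) _ (hv U' hU' (Γ.player h')) h'
          ⟨hm, hn, rfl, _, hv U hU, rfl, ih U hU⟩ ⟨hm, hn, rfl, _, hv U' hU', rfl, ih U' hU'⟩ hneU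
          _ _ (feas U hU) (feas U' hU')
        exact absurd hpref (not_lt.mpr this)
      rw [hact]
      exact .step (ih R hR) hm hn
  obtain ⟨t, ht, htT, hto⟩ := hout Q (fun j => hTD j (hQ j))
  obtain ⟨t', ht', htT', hto'⟩ := hout Q' (fun j => hTD j (hQ' j))
  rcases ((common t ht Q' hQ').to_terminal ht' htT').eq_or_step with rfl | ⟨hnt, _⟩
  · rw [← hto, hto']
  · exact absurd htT hnt

/-! ### Best objects and the profiles with three active agents -/

theorem best_eq {n : ℕ} [NeZero n] {p : Pref n} {A : Finset (Fin n)} {o : Fin n} (ho : o ∈ A)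
    (h : ∀ w ∈ A, p o ≤ p w) : best p A = o := by
  unfold best
  cases hA : A.toList.argmin (fun o => p o) with
  | none =>
    rw [List.argmin_eq_none, Finset.toList_eq_nil] at hA
    simp [hA] at ho
  | some a =>
    have ha : a ∈ A := Finset.mem_toList.mp (List.argmin_mem hA)
    have hle : p a ≤ p o := List.le_of_mem_argmin (Finset.mem_toList.mpr ho) hA
    exact p.injective (le_antisymm hle (h a ha))

theorem topObj_le {n : ℕ} [NeZero n] (p : Pref n) (o : Fin n) : p (topObj p) ≤ p o := by
  simp [topObj]

theorem topObj_ne_of_lt {n : ℕ} [NeZero n] {p : Pref n} {o w : Fin n} (h : p w < p o) :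
    topObj p ≠ o := by
  rintro rfl
  exact absurd (topObj_le p w) (not_le.mpr h)

/-- The profile in which agents `x`, `y`, `z` have preferences `a`, `b`, `c` and every other agent
`j` has preference `N j`. -/
def triProfile {n : ℕ} (x y z : Fin n) (N : Fin n → Pref n) (a b c : Pref n) : Fin n → Pref n :=
  fun j => if j = x then a else if j = y then b else if j = z then c else N j

/-- When all agents other than `x`, `y`, `z` are null and these three are active: the null agents
keep their endowments, equity applies to the three active agents, and they receive their
favourite active objects if these form a three-cycle. -/
theorem triProfile_facts {n : ℕ} [NeZero n] {D : Set (Pref n)}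
    {f : (Fin n → Pref n) → (Fin n → Fin n)}
    (hrule : IsRule D f) (heff : Efficient D f) (hir : IndRational D f) (hequity : EquityUA D f)
    {x y z : Fin n} (hxy : x ≠ y) (hxz : x ≠ z) (hyz : y ≠ z) {N : Fin n → Pref n}
    (hND : ∀ j, N j ∈ D) (hN : ∀ j, topObj (N j) = j) {a b c : Pref n}
    (ha : a ∈ D) (hb : b ∈ D) (hc : c ∈ D)
    (hax : topObj a ≠ x) (hby : topObj b ≠ y) (hcz : topObj c ≠ z)
    {m : Fin n → Fin n} (hm : m = f (triProfile x y z N a b c)) :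
    Function.Injective m ∧ (m x = x ∨ m x = y ∨ m x = z) ∧ (m y = x ∨ m y = y ∨ m y = z) ∧
    (m z = x ∨ m z = y ∨ m z = z) ∧
    a (m x) ≤ a x ∧ b (m y) ≤ b y ∧ c (m z) ≤ c z ∧
    (∀ o, o ≠ x → (o = y ∨ o = z) → a o ≤ a y → a o ≤ a z → a o ≤ a x →
      b x ≤ b y → b x ≤ b z → c x ≤ c y → c x ≤ c z → m x = o) ∧
    (∀ o, o ≠ y → (o = x ∨ o = z) → b o ≤ b x → b o ≤ b z → b o ≤ b y →
      a y ≤ a x → a y ≤ a z → c y ≤ c x → c y ≤ c z → m y = o) ∧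
    (∀ o, o ≠ z → (o = x ∨ o = y) → c o ≤ c x → c o ≤ c y → c o ≤ c z →
      a z ≤ a x → a z ≤ a y → b z ≤ b x → b z ≤ b y → m z = o) ∧
    (a y ≤ a x → a y ≤ a z → b z ≤ b x → b z ≤ b y → c x ≤ c y → c x ≤ c z →
      m x = y ∧ m y = z ∧ m z = x) := by
  have hyx := hxy.symm
  have hzx := hxz.symm
  have hzy := hyz.symm
  set P := triProfile x y z N a b c with hP
  have hPx : P x = a := by simp [hP, triProfile]
  have hPy : P y = b := by simp [hP, triProfile, hyx]
  have hPz : P z = c := by simp [hP, triProfile, hzx, hzy]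
  have hPN : ∀ j, j ≠ x → j ≠ y → j ≠ z → P j = N j := by
    intro j h1 h2 h3; simp [hP, triProfile, h1, h2, h3]
  have hPD : inD D P := by
    intro j
    by_cases h1 : j = x
    · rw [h1, hPx]; exact ha
    by_cases h2 : j = y
    · rw [h2, hPy]; exact hb
    by_cases h3 : j = z
    · rw [h3, hPz]; exact hc
    rw [hPN j h1 h2 h3]; exact hND j
  have hinj : Function.Injective m := hm ▸ (hrule P hPD).injective
  have hIR : ∀ i, P i (m i) ≤ P i i := hm ▸ hir P hPD
  have hnull : ∀ j, j ≠ x → j ≠ y → j ≠ z → m j = j := by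
    intro j h1 h2 h3
    have := hIR j
    rw [hPN j h1 h2 h3] at this
    have h0 := topObj_le (N j) (m j)
    rw [hN] at h0
    exact (N j).injective (le_antisymm this h0)
  have hin : ∀ i, (i = x ∨ i = y ∨ i = z) → (m i = x ∨ m i = y ∨ m i = z) := by
    intro i hi
    by_contra hcon
    push Not at hcon
    have := hinj (hnull (m i) hcon.1 hcon.2.1 hcon.2.2)
    grind
  have hact : activeAgents P = {x, y, z} := by
    ext j
    simp only [activeAgents, Finset.mem_filter, Finset.mem_univ, true_and, Finset.mem_insert,
      Finset.mem_singleton]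
    by_cases h1 : j = x
    · subst h1; simp [hPx, hax]
    by_cases h2 : j = y
    · subst h2; simp [hPy, hby]
    by_cases h3 : j = z
    · subst h3; simp [hPz, hcz]
    simp [hPN j h1 h2 h3, hN, h1, h2, h3]
  have hcard : ({x, y, z} : Finset (Fin n)).card = 3 := Finset.card_eq_three.mpr
    ⟨x, y, z, hxy, hxz, hyz, rfl⟩
  have heq : ∀ i ∈ ({x, y, z} : Finset (Fin n)), ∀ o ∈ ({x, y, z} : Finset (Fin n)), o ≠ i →
      (∀ w ∈ ({x, y, z} : Finset (Fin n)), P i o ≤ P i w) →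
      (∀ j ∈ ({x, y, z} : Finset (Fin n)), j ≠ i →
        ∀ w ∈ ({x, y, z} : Finset (Fin n)), P j i ≤ P j w) → m i = o := by
    intro i hi o ho hoi h1 h2
    have hbest : best (P i) {x, y, z} = o := best_eq ho h1
    have := hequity P hPD i ⟨by rw [hact, hcard]; norm_num, by rw [hact]; exact hi,
      by rw [hact, hbest]; exact hoi,
      by rw [hact]; exact fun j hj hji => best_eq hi (h2 j hj hji)⟩
    rw [hm, this, hact, hbest]
  refine ⟨hinj, hin x (by simp), hin y (by simp), hin z (by simp), by simpa [hPx] using hIR x,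
    by simpa [hPy] using hIR y, by simpa [hPz] using hIR z, ?_, ?_, ?_, ?_⟩
  · intro o hox ho h1 h2 h3 h4 h5 h6 h7
    apply heq x (by simp) o (by simp; tauto) hox <;>
      simp [hPx, hPy, hPz, hxy, hxz, hyz, hyx, hzx, hzy, h1, h2, h3, h4, h5, h6, h7]
  · intro o hox ho h1 h2 h3 h4 h5 h6 h7
    apply heq y (by simp) o (by simp; tauto) hox <;>
      simp [hPx, hPy, hPz, hxy, hxz, hyz, hyx, hzx, hzy, h1, h2, h3, h4, h5, h6, h7]
  · intro o hox ho h1 h2 h3 h4 h5 h6 h7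
    apply heq z (by simp) o (by simp; tauto) hox <;>
      simp [hPx, hPy, hPz, hxy, hxz, hyz, hyx, hzx, hzy, h1, h2, h3, h4, h5, h6, h7]
  · intro h1 h2 h3 h4 h5 h6
    by_contra hcon
    apply heff P hPD
    rw [← hm]
    let m' : Fin n → Fin n :=
      fun j => if j = x then y else if j = y then z else if j = z then x else j
    have hm'x : m' x = y := by simp [m']
    have hm'y : m' y = z := by simp [m', hyx]
    have hm'z : m' z = x := by simp [m', hzx, hzy]
    have hm'N : ∀ j, j ≠ x → j ≠ y → j ≠ z → m' j = j := by
      intro j h1 h2 h3; simp [m', h1, h2, h3]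
    have hm'inj : Function.Injective m' := by
      intro u v huv
      simp only [m'] at huv
      grind
    have hweak : ∀ i, P i (m' i) ≤ P i (m i) := by
      intro i
      by_cases g1 : i = x
      · subst g1
        rw [hm'x, hPx]
        rcases hin i (by simp) with h | h | h <;> rw [h]
        exacts [h1, h2]
      by_cases g2 : i = y
      · subst g2
        rw [hm'y, hPy]
        rcases hin i (by simp) with h | h | h <;> rw [h]
        exacts [h3, h4]
      by_cases g3 : i = z
      · subst g3
        rw [hm'z, hPz]
        rcases hin i (by simp) with h | h | h <;> rw [h]
        exacts [h5, h6]
      rw [hm'N i g1 g2 g3, hnull i g1 g2 g3]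
    refine ⟨m', Finite.injective_iff_bijective.mp hm'inj, hweak, ?_⟩
    have : ∃ i, m' i ≠ m i := by
      by_contra hall
      push Not at hall
      exact hcon ⟨by rw [← hall, hm'x], by rw [← hall, hm'y], by rw [← hall, hm'z]⟩
    obtain ⟨i, hi⟩ := this
    exact ⟨i, lt_of_le_of_ne (hweak i) (fun h => hi ((P i).injective h))⟩

/-! ### No preference ranks the middle object of a connected triple last -/

theorem pair_cases {α : Type*} {u v q q' : α} (hq : q ∈ ({u, v} : Set α))
    (hq' : q' ∈ ({u, v} : Set α)) (hne : q ≠ q') : (u = q ∧ v = q') ∨ (u = q' ∧ v = q) := by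
  simp only [Set.mem_insert_iff, Set.mem_singleton_iff] at hq hq'
  grind

/-- Preferences with restrictions `y, x, z`, `z, y, x` and `x, z, y` to `{x, y, z}` cannot all
belong to `D`. -/
theorem no_bad_triple {n : ℕ} [NeZero n] {D : Set (Pref n)}
    {f : (Fin n → Pref n) → (Fin n → Fin n)}
    (hrule : IsRule D f) (heff : Efficient D f) (hir : IndRational D f)
    (hosp : OSP D f) (hequity : EquityUA D f)
    (htop : ∀ o, ∃ p ∈ D, topObj p = o) {x y z : Fin n} {b e p : Pref n}
    (hb : b ∈ D) (he : e ∈ D) (hp : p ∈ D)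
    (hb1 : b y < b x) (hb2 : b x < b z) (he1 : e z < e y) (he2 : e y < e x)
    (hp1 : p x < p z) (hp2 : p z < p y) : False := by
  have hxy : x ≠ y := by rintro rfl; exact lt_irrefl _ hb1
  have hxz : x ≠ z := by rintro rfl; exact lt_irrefl _ hb2
  have hyz : y ≠ z := by rintro rfl; exact lt_irrefl _ he1
  choose N hND hN using htop
  have hb3 := hb1.trans hb2
  have he3 := he1.trans he2
  have hp3 := hp1.trans hp2
  have bx := topObj_ne_of_lt hb1
  have bz := topObj_ne_of_lt hb2
  have ex := topObj_ne_of_lt he2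
  have ey := topObj_ne_of_lt he1
  have py := topObj_ne_of_lt hp2
  have pz := topObj_ne_of_lt hp1
  have key := fun {u v w : Pref n} => @triProfile_facts n _ D f hrule heff hir hequity x y z
    hxy hxz hyz N hND hN u v w
  -- Agent `z` is acclaimed and takes `y`, and agent `y` then insists on `z`.
  have f1 : f (triProfile x y z N e e b) x = x := by
    obtain ⟨hinj, i1, i2, i3, r1, r2, r3, -, -, q, -⟩ := key he he hb ex ey bz rfl
    have hz := q y hyz (Or.inr rfl) hb1.le le_rfl hb3.le he3.le he1.le he3.le he1.le
    generalize f (triProfile x y z N e e b) = m at *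
    have := @hinj x y; have := @hinj x z; have := @hinj y z
    grind
  have f2 : f (triProfile x y z N b p p) x = y := by
    obtain ⟨hinj, i1, i2, i3, r1, r2, r3, q, -, -, -⟩ := key hb hp hp bx py pz rfl
    exact q y hxy.symm (Or.inl rfl) le_rfl hb3.le hb1.le hp3.le hp1.le hp3.le hp1.le
  -- Agent `x` is acclaimed and takes `z`, and agent `z` then insists on `x`.
  have f3 : f (triProfile x y z N e p p) y = y := by
    obtain ⟨hinj, i1, i2, i3, r1, r2, r3, q, -, -, -⟩ := key he hp hp ex py pz rfl
    have hz := q z hxz.symm (Or.inr rfl) he1.le le_rfl he3.le hp3.le hp1.le hp3.le hp1.le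
    generalize f (triProfile x y z N e p p) = m at *
    have := @hinj x y; have := @hinj x z; have := @hinj y z
    grind
  have f4 : f (triProfile x y z N b e p) y = z ∧ f (triProfile x y z N b e p) z = x := by
    obtain ⟨hinj, i1, i2, i3, r1, r2, r3, -, -, -, q⟩ := key hb he hp bx ey pz rfl
    exact (q hb1.le hb3.le he3.le he1.le hp3.le hp1.le).2
  -- Agent `y` is acclaimed and takes `x`, and agent `x` then insists on `y`.
  have f5 : f (triProfile x y z N b p b) z = z := by
    obtain ⟨hinj, i1, i2, i3, r1, r2, r3, -, q, -, -⟩ := key hb hp hb bx py bz rfl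
    have hz := q x hxy (Or.inl rfl) le_rfl hp1.le hp3.le hb1.le hb3.le hb1.le hb3.le
    generalize f (triProfile x y z N b p b) = m at *
    have := @hinj x y; have := @hinj x z; have := @hinj y z
    grind
  let T : Fin n → Set (Pref n) := fun j =>
    if j = x then {e, b} else if j = y then {p, e} else if j = z then {b, p} else {N j}
  have hTx : T x = {e, b} := by simp [T]
  have hTy : T y = {p, e} := by simp [T, hxy.symm]
  have hTz : T z = {b, p} := by simp [T, hxz.symm, hyz.symm]
  have hTN : ∀ j, j ≠ x → j ≠ y → j ≠ z → T j = {N j} := by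
    intro j h1 h2 h3; simp [T, h1, h2, h3]
  have hmem : ∀ a' ∈ ({e, b} : Set (Pref n)), ∀ b' ∈ ({p, e} : Set (Pref n)),
      ∀ c' ∈ ({b, p} : Set (Pref n)), ∀ j, triProfile x y z N a' b' c' j ∈ T j := by
    intro a' ha' b' hb' c' hc' j
    simp only [triProfile, T]
    split_ifs
    exacts [ha', hb', hc', rfl]
  have tx : ∀ a' b' c', triProfile x y z N a' b' c' x = a' := by simp [triProfile]
  have ty : ∀ a' b' c', triProfile x y z N a' b' c' y = b' := by simp [triProfile, hxy.symm]
  have tz : ∀ a' b' c', triProfile x y z N a' b' c' z = c' := by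
    simp [triProfile, hxz.symm, hyz.symm]
  have hconst := hosp.const_of_inseparable T ?_ ?_
    (hmem e (by simp) e (by simp) b (by simp)) (hmem b (by simp) p (by simp) p (by simp))
  · rw [hconst, f2] at f1
    exact hxy f1.symm
  · intro j q hq
    simp only [T] at hq
    split_ifs at hq <;>
      simp only [Set.mem_insert_iff, Set.mem_singleton_iff] at hq <;>
      rcases hq with rfl | rfl <;> first | assumption | exact hND _
  · intro i q hq q' hq' hne
    by_cases h1 : i = x
    · rw [h1, hTx] at hq hq'
      rw [h1]
      refine ⟨_, _, hmem e (by simp) e (by simp) b (by simp),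
        hmem b (by simp) p (by simp) p (by simp), ?_, ?_⟩
      · rw [tx, tx]
        exact pair_cases hq hq' hne
      · rw [f1, f2, tx]
        exact he2
    by_cases h2 : i = y
    · rw [h2, hTy] at hq hq'
      rw [h2]
      refine ⟨_, _, hmem e (by simp) p (by simp) p (by simp),
        hmem b (by simp) e (by simp) p (by simp), ?_, ?_⟩
      · rw [ty, ty]
        exact pair_cases hq hq' hne
      · rw [f3, f4.1, ty]
        exact hp2
    by_cases h3 : i = z
    · rw [h3, hTz] at hq hq'
      rw [h3]
      refine ⟨_, _, hmem b (by simp) p (by simp) b (by simp),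
        hmem b (by simp) e (by simp) p (by simp), ?_, ?_⟩
      · rw [tz, tz]
        exact pair_cases hq hq' hne
      · rw [f5, f4.2, tz]
        exact hb2
    rw [hTN i h1 h2 h3, Set.mem_singleton_iff] at hq hq'
    exact absurd (hq.trans hq'.symm) hne

/-- In a path-connected domain over at least two objects, every object is top-ranked by some
preference, so every agent can be made null. -/
theorem exists_topObj {n : ℕ} [NeZero n] (hn : 2 ≤ n) {D : Set (Pref n)} (h : pathConnected D)
    (o : Fin n) : ∃ p ∈ D, topObj p = o := by
  have : Nontrivial (Fin n) := Fin.nontrivial_iff_two_le.mpr hn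
  obtain ⟨o', ho'⟩ := exists_ne o
  obtain ⟨l, -, hh, hl, hc⟩ := h o o' ho'.symm
  match l, hh, hl, hc with
  | [], hh, _, _ => simp at hh
  | [a], hh, hl, _ => simp at hh hl; exact absurd (hl.symm.trans hh) ho'
  | a :: b :: l, hh, _, hc =>
    obtain ⟨⟨p, hp, _, _, hpt, _⟩, -⟩ := List.isChain_cons_cons.mp hc
    simp at hh
    exact ⟨p, hp, hpt.trans hh⟩

theorem lt_of_topObj_secondObj {n : ℕ} [NeZero n] (hn : 3 ≤ n) {p : Pref n} {u v w : Fin n}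
    (hu : topObj p = u) (hv : secondObj p = v) (huw : u ≠ w) (hvw : v ≠ w) :
    p u < p v ∧ p v < p w := by
  have h0 : p u = 0 := by simp [← hu, topObj]
  have h1 : p v = 1 := by simp [← hv, secondObj]
  have w0 : p w ≠ 0 := fun h => huw (p.injective (h0.trans h.symm))
  have w1 : p w ≠ 1 := fun h => hvw (p.injective (h1.trans h.symm))
  rw [h0, h1]
  have v1 : ((1 : Fin n) : ℕ) = 1 := by rw [Fin.val_one']; exact Nat.mod_eq_of_lt (by omega)
  have v0 : ((0 : Fin n) : ℕ) = 0 := rfl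
  rw [ne_eq, Fin.ext_iff] at w0 w1
  rw [Fin.lt_def, Fin.lt_def]
  omega

theorem middle_not_worst {n : ℕ} [NeZero n] (hn : 3 ≤ n) {D : Set (Pref n)}
    {f : (Fin n → Pref n) → (Fin n → Fin n)} (hpath : pathConnected D)
    (hrule : IsRule D f) (heff : Efficient D f) (hir : IndRational D f)
    (hosp : OSP D f) (hequity : EquityUA D f) {x y z : Fin n}
    (hxy : x ≠ y) (hxz : x ≠ z) (hyz : y ≠ z)
    (cxy : connectedObj D x y) (cyz : connectedObj D y z) {p : Pref n} (hp : p ∈ D) :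
    p y < p x ∨ p y < p z := by
  by_contra hcon
  push Not at hcon
  have hx : p x < p y := lt_of_le_of_ne hcon.1 (fun h => hxy (p.injective h))
  have hz : p z < p y := lt_of_le_of_ne hcon.2 (fun h => hyz (p.injective h).symm)
  have htop := exists_topObj (by omega) hpath
  obtain ⟨a, ha, b, hb, a1, a2, b1, b2⟩ := cxy
  obtain ⟨c, hc, e, he, c1, c2, e1, e2⟩ := cyz
  rcases lt_or_gt_of_ne (fun h : p x = p z => hxz (p.injective h)) with h | h
  · have hB := lt_of_topObj_secondObj hn b1 b2 hyz hxz
    have hE := lt_of_topObj_secondObj hn e1 e2 hxz.symm hxy.symm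
    exact no_bad_triple hrule heff hir hosp hequity htop hb he hp hB.1 hB.2 hE.1 hE.2 h hz
  · have hC := lt_of_topObj_secondObj hn c1 c2 hxy.symm hxz.symm
    have hA := lt_of_topObj_secondObj hn a1 a2 hxz hyz
    exact no_bad_triple hrule heff hir hosp hequity htop hc ha hp hC.1 hC.2 hA.1 hA.2 h hx

theorem path_monotone_preferences (n : ℕ) [NeZero n] (hn : 3 ≤ n) (D : Set (Pref n))
    (hrich : richDomain D) (f : (Fin n → Pref n) → (Fin n → Fin n))
    (hrule : IsRule D f) (heff : Efficient D f) (hir : IndRational D f)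
    (hosp : OSP D f) (hequity : EquityUA D f)
    (l : List (Fin n)) (hq : 3 ≤ l.length) (hnd : l.Nodup)
    (hch : l.Chain' (connectedObj D)) :
    ∀ (k : ℕ) (hk : k < l.length), ∀ p ∈ D, topObj p = l.get ⟨k, hk⟩ →
      (∀ (s : ℕ) (hs0 : 0 < s) (hsk : s < k),
        prefers p (l.get ⟨s, by omega⟩) (l.get ⟨s - 1, by omega⟩)) ∧
      (∀ (t : ℕ) (htk : k < t) (ht2 : t + 1 < l.length),
        prefers p (l.get ⟨t, by omega⟩) (l.get ⟨t + 1, ht2⟩)) := by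
  intro k hk p hp htop
  simp only [List.get_eq_getElem, prefers] at htop ⊢
  have hne : ∀ (i j : ℕ) (hi : i < l.length) (hj : j < l.length), i ≠ j → l[i] ≠ l[j] :=
    fun i j hi hj hij h => hij ((hnd.getElem_inj_iff).mp h)
  have hconn : ∀ (i : ℕ) (hi : i + 1 < l.length), connectedObj D l[i] l[i + 1] :=
    fun i hi => List.isChain_iff_getElem.mp hch i hi
  have hmid : ∀ (i : ℕ) (hi : i + 2 < l.length),
      p l[i + 1] < p l[i] ∨ p l[i + 1] < p l[i + 2] := fun i hi =>
    middle_not_worst hn hrich.1 hrule heff hir hosp hequity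
      (hne _ _ _ _ (by omega)) (hne _ _ _ _ (by omega)) (hne _ _ _ _ (by omega))
      (hconn i (by omega)) (hconn (i + 1) hi) hp
  have hbest : ∀ (i : ℕ) (hi : i < l.length), i ≠ k → p l[k] < p l[i] := by
    intro i hi hik
    refine lt_of_le_of_ne (htop ▸ topObj_le p _) (fun h => ?_)
    exact hne _ _ _ _ hik.symm (p.injective h)
  -- Both inductions run outwards from `k`, starting with the step away from the top itself.
  have hdown : ∀ (d i : ℕ) (_ : i + 1 + d = k) (_ : i + 1 < l.length), p l[i + 1] < p l[i] := by
    intro d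
    induction d with
    | zero =>
      intro i hi hl
      obtain rfl : i + 1 = k := by omega
      exact hbest i (by omega) (by omega)
    | succ d ih =>
      intro i hi hl
      have h2 := ih (i + 1) (by omega) (by omega)
      exact (hmid i (by omega)).resolve_right (not_lt.mpr h2.le)
  have hup : ∀ (d : ℕ) (_ : k + d + 1 < l.length), p l[k + d] < p l[k + d + 1] := by
    intro d
    induction d with
    | zero => intro hl; exact hbest (k + 0 + 1) hl (by omega)
    | succ d ih =>
      intro hl
      have h2 := ih (by omega)
      exact (hmid (k + d) (by omega)).resolve_left (not_lt.mpr h2.le)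
  constructor
  · intro s hs0 hsk
    obtain ⟨i, rfl⟩ : ∃ i, s = i + 1 := ⟨s - 1, by omega⟩
    exact hdown (k - (i + 1)) i (by omega) (by omega)
  · intro t htk ht2
    obtain ⟨d, rfl⟩ : ∃ d, t = k + d := ⟨t - k, by omega⟩
    exact hup d ht2
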